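/- arXiv:2004.14197 — 5 statements merged into one kernel-verified Lean document; each statement's English description precedes it below -/
import Mathlib

section
/- Let k be an integral domain in which 2 ≠ 0, and let σ be the k-algebra automorphism of k⟦x,y⟧ exchanging x and y. If u ∈ k⟦x,y⟧ is an invertible power series with constant term 1 such that σ(u) = u⁻¹, then u ≡ 1 mod (x−y), i.e., (x−y) divides u − 1 in k⟦x,y⟧. -/
noncomputable section
open MvPowerSeries

/-- The automorphism of `k⟦x,y⟧` exchanging the two variables. -/
def swapPS {k : Type*} [CommRing k] (f : MvPowerSeries (Fin 2) k) : MvPowerSeries (Fin 2) k :=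
  fun d => MvPowerSeries.coeff (Finsupp.equivMapDomain (Equiv.swap 0 1) d) f

def toDiag : Fin 2 → Unit := fun _ => ()

def prPS (a b : ℕ) : Fin 2 →₀ ℕ := Finsupp.single 0 a + Finsupp.single 1 b

theorem prPS_zero (a b : ℕ) : prPS a b 0 = a := by simp [prPS]

theorem prPS_one (a b : ℕ) : prPS a b 1 = b := by simp [prPS]

theorem prPS_eta (d : Fin 2 →₀ ℕ) : prPS (d 0) (d 1) = d := by
  ext i
  fin_cases i
  · exact prPS_zero _ _
  · exact prPS_one _ _

theorem mapDomain_toDiag (d : Fin 2 →₀ ℕ) (n : ℕ) :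
    Finsupp.mapDomain toDiag d = Finsupp.single () n ↔ d 0 + d 1 = n := by
  have h : Finsupp.mapDomain toDiag d = Finsupp.single () (d 0 + d 1) := by
    rw [Finsupp.mapDomain, Finsupp.sum_fintype _ _ (by simp), Fin.sum_univ_two,
      Finsupp.single_add]
  rw [h]
  exact (Finsupp.single_injective ()).eq_iff

theorem coeff_diag {k : Type*} [CommRing k] (w : MvPowerSeries (Fin 2) k) (n : ℕ) :
    coeff (Finsupp.single () n) (rename toDiag w) =
      ∑ a ∈ Finset.range (n + 1), coeff (prPS a (n - a)) w := by
  rw [coeff_rename]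
  refine Finset.sum_nbij' (fun d => d 0) (fun a => prPS a (n - a)) ?_ ?_ ?_ ?_ ?_
  · intro d hd
    simp [mapDomain_toDiag] at hd ⊢
    omega
  · intro a ha
    simp [mapDomain_toDiag, prPS_zero, prPS_one] at ha ⊢
    omega
  · intro d hd
    simp [mapDomain_toDiag] at hd
    have : n - d 0 = d 1 := by omega
    simp only [this, prPS_eta]
  · intro a ha
    exact prPS_zero _ _
  · intro d hd
    simp [mapDomain_toDiag] at hd
    have : n - d 0 = d 1 := by omega
    simp only [this, prPS_eta]

theorem rename_swapPS {k : Type*} [CommRing k] (w : MvPowerSeries (Fin 2) k) :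
    rename toDiag (swapPS w) = rename toDiag w := by
  have h : swapPS w = rename (Equiv.swap (0 : Fin 2) 1) w := by
    ext d
    have := coeff_embDomain_rename (Equiv.swap (0 : Fin 2) 1).toEmbedding w
      (Finsupp.equivMapDomain (Equiv.swap 0 1) d)
    have e : Finsupp.embDomain (Equiv.swap (0 : Fin 2) 1).toEmbedding
      (Finsupp.equivMapDomain (Equiv.swap 0 1) d) = d := by
      rw [Finsupp.embDomain_eq_mapDomain, Finsupp.equivMapDomain_eq_mapDomain]
      erw [← Finsupp.mapDomain_comp]
      convert Finsupp.mapDomain_id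
      ext i
      simp
    rw [e] at this
    exact this.symm
  rw [h, rename_rename]
  rfl

theorem dvd_of_diag {k : Type*} [CommRing k] (w : MvPowerSeries (Fin 2) k)
    (hw : rename toDiag w = 0) : ((X 0 : MvPowerSeries (Fin 2) k) - X 1) ∣ w := by
  have hs (n : ℕ) : ∑ a ∈ Finset.range (n + 1), coeff (prPS a (n - a)) w = 0 := by
    rw [← coeff_diag, hw, map_zero]
  let q : MvPowerSeries (Fin 2) k := fun d =>
    - ∑ a ∈ Finset.range (d 0 + 1), coeff (prPS a (d 0 + d 1 + 1 - a)) w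
  have hq (d) : coeff d q =
    - ∑ a ∈ Finset.range (d 0 + 1), coeff (prPS a (d 0 + d 1 + 1 - a)) w := rfl
  refine ⟨q, ?_⟩
  ext d
  rw [sub_mul, map_sub, X, X, coeff_monomial_mul, coeff_monomial_mul]
  obtain ⟨i, j, rfl⟩ : ∃ i j, d = prPS i j := ⟨_, _, (prPS_eta d).symm⟩
  simp only [Finsupp.single_le_iff, hq, Finsupp.tsub_apply, prPS_zero, prPS_one, one_mul]
  have e1 : (Finsupp.single (0 : Fin 2) 1 : Fin 2 →₀ ℕ) 1 = 0 := by simp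
  have e2 : (Finsupp.single (1 : Fin 2) 1 : Fin 2 →₀ ℕ) 0 = 0 := by simp
  simp only [e1, e2, Finsupp.single_eq_same, Nat.sub_zero]
  have h1 : (if 1 ≤ i then - ∑ a ∈ Finset.range (i - 1 + 1),
      coeff (prPS a (i - 1 + j + 1 - a)) w else 0) =
      - ∑ a ∈ Finset.range i, coeff (prPS a (i + j - a)) w := by
    rcases i with _ | i
    · simp
    · simp [show i + j + 1 = i + 1 + j by omega]
  have h2 : (if 1 ≤ j then - ∑ a ∈ Finset.range (i + 1),
      coeff (prPS a (i + (j - 1) + 1 - a)) w else 0) =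
      - ∑ a ∈ Finset.range (i + 1), coeff (prPS a (i + j - a)) w := by
    rcases j with _ | j
    · simp [hs]
    · simp [show i + j + 1 = i + (j + 1) by omega]
  rw [h1, h2, Finset.sum_range_succ, Nat.add_sub_cancel_left]
  ring

theorem stmt9 {k : Type*} [CommRing k] [IsDomain k] (h2 : (2 : k) ≠ 0)
    (u v : MvPowerSeries (Fin 2) k)
    (huv : u * v = 1)
    (hconst : MvPowerSeries.constantCoeff u = 1)
    (hσ : swapPS u = v) :
    ((X 0 : MvPowerSeries (Fin 2) k) - X 1) ∣ u - 1 := by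
  have hD : rename toDiag u * rename toDiag u = 1 := by
    have := congrArg (rename toDiag) huv
    rwa [map_mul, map_one, ← hσ, rename_swapPS] at this
  apply dvd_of_diag
  rw [map_sub, map_one]
  rcases mul_self_eq_one_iff.mp hD with h | h
  · rw [h, sub_self]
  · exfalso
    have hc := congrArg constantCoeff h
    rw [constantCoeff_rename, hconst, map_neg, map_one] at hc
    apply h2
    linear_combination hc
end
end

section
/- Let k be a commutative ring and p(x,y) ∈ k⟦x,y⟧ any power series; write p₁₂ = p(x₁,x₂) and p₂₁ = p(x₂,x₁) in k⟦x₁,x₂⟧, and let E₁ = x₁ + x₂, E₂ = x₁x₂. For every integer n ≥ 0 there is a unique power series ρ_n ∈ k⟦x₁,x₂⟧ satisfying (x₁ − x₂)·ρ_n = x₁ⁿ·p₁₂ − x₂ⁿ·p₂₁; moreover each ρ_n is symmetric in x₁ and x₂, and the recursion ρ_{n+2} − E₁·ρ_{n+1} + E₂·ρ_n = 0 holds for all n ≥ 0. -/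
noncomputable section
open MvPowerSeries

theorem swapPS_eq_rename {k : Type*} [CommRing k] (f : MvPowerSeries (Fin 2) k) :
    swapPS f = MvPowerSeries.renameEquiv k (Equiv.swap (0 : Fin 2) 1) f := by
  ext d
  have h := MvPowerSeries.coeff_embDomain_rename (R := k)
    (Equiv.swap (0 : Fin 2) 1).toEmbedding f (Finsupp.equivMapDomain (Equiv.swap 0 1) d)
  have e : Finsupp.embDomain (Equiv.swap (0 : Fin 2) 1).toEmbedding
      (Finsupp.equivMapDomain (Equiv.swap 0 1) d) = d := by
    rw [Finsupp.embDomain_eq_mapDomain, Finsupp.equivMapDomain_eq_mapDomain,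
      ← Finsupp.mapDomain_comp]
    convert Finsupp.mapDomain_id
    ext x
    simp
  rw [e] at h
  exact h.symm

/-- The exponent `(a, b)`. -/
def ex2 (a b : ℕ) : Fin 2 →₀ ℕ := Finsupp.single 0 a + Finsupp.single 1 b

theorem ex2_zero (a b : ℕ) : ex2 a b 0 = a := by simp [ex2]

theorem ex2_one (a b : ℕ) : ex2 a b 1 = b := by simp [ex2]

theorem ex2_ext (d : Fin 2 →₀ ℕ) : ex2 (d 0) (d 1) = d := by
  ext i
  fin_cases i
  · exact ex2_zero _ _
  · exact ex2_one _ _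

theorem ps_ext {k : Type*} [CommRing k] {f g : MvPowerSeries (Fin 2) k}
    (h : ∀ a b, coeff (ex2 a b) f = coeff (ex2 a b) g) : f = g := by
  ext d
  rw [← ex2_ext d]
  exact h _ _

theorem coeff_X0 {k : Type*} [CommRing k] (f : MvPowerSeries (Fin 2) k) (a b : ℕ) :
    coeff (ex2 (a + 1) b) (X 0 * f) = coeff (ex2 a b) f := by
  have : ex2 (a + 1) b = Finsupp.single 0 1 + ex2 a b := by
    simp only [ex2, Finsupp.single_add]; abel
  rw [this, X, coeff_add_monomial_mul, one_mul]

theorem coeff_X1 {k : Type*} [CommRing k] (f : MvPowerSeries (Fin 2) k) (a b : ℕ) :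
    coeff (ex2 a (b + 1)) (X 1 * f) = coeff (ex2 a b) f := by
  have : ex2 a (b + 1) = Finsupp.single 1 1 + ex2 a b := by
    simp only [ex2, Finsupp.single_add]; abel
  rw [this, X, coeff_add_monomial_mul, one_mul]

theorem coeff_X0_zero {k : Type*} [CommRing k] (f : MvPowerSeries (Fin 2) k) (b : ℕ) :
    coeff (ex2 0 b) (X 0 * f) = 0 := by
  classical
  rw [X, coeff_monomial_mul, if_neg]
  intro h
  have := h 0
  simp [ex2] at this

theorem coeff_X1_zero {k : Type*} [CommRing k] (f : MvPowerSeries (Fin 2) k) (a : ℕ) :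
    coeff (ex2 a 0) (X 1 * f) = 0 := by
  classical
  rw [X, coeff_monomial_mul, if_neg]
  intro h
  have := h 1
  simp [ex2] at this

theorem cancel_aux {k : Type*} [CommRing k] (h : MvPowerSeries (Fin 2) k)
    (hh : ((X 0 : MvPowerSeries (Fin 2) k) - X 1) * h = 0) : h = 0 := by
  have key : ∀ a b, coeff (ex2 a b) h = 0 := by
    intro a
    induction a with
    | zero =>
      intro b
      have := congrArg (coeff (ex2 0 (b + 1))) hh
      rw [sub_mul, map_sub, coeff_X0_zero, coeff_X1] at this
      simpa using this
    | succ a ih =>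
      intro b
      have := congrArg (coeff (ex2 (a + 1) (b + 1))) hh
      rw [sub_mul, map_sub, coeff_X0, coeff_X1, ih] at this
      simpa using this
  apply ps_ext
  intro a b
  rw [key, map_zero]

theorem cancel {k : Type*} [CommRing k] {f g : MvPowerSeries (Fin 2) k}
    (hh : ((X 0 : MvPowerSeries (Fin 2) k) - X 1) * f = (X 0 - X 1) * g) : f = g := by
  apply sub_eq_zero.1
  apply cancel_aux
  rw [mul_sub, hh, sub_self]

theorem coeff_swapPS {k : Type*} [CommRing k] (f : MvPowerSeries (Fin 2) k) (a b : ℕ) :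
    coeff (ex2 a b) (swapPS f) = coeff (ex2 b a) f := by
  change coeff (Finsupp.equivMapDomain (Equiv.swap 0 1) (ex2 a b)) f = _
  congr 2
  ext i
  fin_cases i <;> simp [ex2, Finsupp.equivMapDomain_apply]

theorem exists_quot {k : Type*} [CommRing k] (f : MvPowerSeries (Fin 2) k) :
    ∃ ρ, ((X 0 : MvPowerSeries (Fin 2) k) - X 1) * ρ = f - swapPS f := by
  let c : ℕ → ℕ → k := fun a b => coeff (ex2 a b) (f - swapPS f)
  let ρ : MvPowerSeries (Fin 2) k := fun d =>
    -∑ i ∈ Finset.range (d 0 + 1), c i (d 0 + d 1 + 1 - i)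
  have hρ : ∀ a b, coeff (ex2 a b) ρ =
      -∑ i ∈ Finset.range (a + 1), c i (a + b + 1 - i) := by
    intro a b
    change -∑ i ∈ Finset.range (ex2 a b 0 + 1), c i (ex2 a b 0 + ex2 a b 1 + 1 - i) = _
    rw [ex2_zero, ex2_one]
  have hsum : ∀ N, ∑ i ∈ Finset.range (N + 1), c i (N - i) = 0 := by
    intro N
    simp only [c, map_sub, coeff_swapPS, Finset.sum_sub_distrib]
    rw [sub_eq_zero, ← Finset.sum_range_reflect]
    apply Finset.sum_congr rfl
    intro i hi
    have := Finset.mem_range.1 hi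
    congr 3 <;> omega
  refine ⟨ρ, ps_ext ?_⟩
  intro a b
  change _ = c a b
  rw [sub_mul, map_sub]
  rcases a with _ | a
  · rw [coeff_X0_zero]
    rcases b with _ | b
    · rw [coeff_X1_zero]
      have := hsum 0
      simpa using this.symm
    · rw [coeff_X1, hρ]
      simp
  · rw [coeff_X0, hρ]
    rcases b with _ | b
    · rw [coeff_X1_zero]
      have := hsum (a + 1)
      rw [Finset.sum_range_succ] at this
      simp only [Nat.sub_self] at this
      rw [add_zero, sub_zero]
      linear_combination -this
    · rw [coeff_X1, hρ, Finset.sum_range_succ _ (a + 1)]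
      have e1 : a + 1 + b + 1 - (a + 1) = b + 1 := by omega
      have e2 : a + (b + 1) + 1 = a + 1 + b + 1 := by omega
      rw [e1, e2]
      ring

theorem swap_Xpow {k : Type*} [CommRing k] (p : MvPowerSeries (Fin 2) k) (n : ℕ) :
    swapPS ((X 0 : MvPowerSeries (Fin 2) k) ^ n * p) = X 1 ^ n * swapPS p := by
  simp [swapPS_eq_rename]

theorem swap_swap' {k : Type*} [CommRing k] (p : MvPowerSeries (Fin 2) k) :
    swapPS (swapPS p) = p := by
  apply ps_ext
  intro a b
  rw [coeff_swapPS, coeff_swapPS]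

theorem stmt11 {k : Type*} [CommRing k] (p : MvPowerSeries (Fin 2) k) :
    -- existence and uniqueness of `ρ_n`, and its symmetry
    (∀ n : ℕ,
      (∃! ρ : MvPowerSeries (Fin 2) k,
        ((X 0 : MvPowerSeries (Fin 2) k) - X 1) * ρ =
          (X 0 : MvPowerSeries (Fin 2) k) ^ n * p - (X 1 : MvPowerSeries (Fin 2) k) ^ n * swapPS p) ∧
      (∀ ρ : MvPowerSeries (Fin 2) k,
        ((X 0 : MvPowerSeries (Fin 2) k) - X 1) * ρ =
          (X 0 : MvPowerSeries (Fin 2) k) ^ n * p - (X 1 : MvPowerSeries (Fin 2) k) ^ n * swapPS p →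
        swapPS ρ = ρ)) ∧
    -- the recursion `ρ_{n+2} − E₁·ρ_{n+1} + E₂·ρ_n = 0`
    (∀ (n : ℕ) (ρn ρn1 ρn2 : MvPowerSeries (Fin 2) k),
      ((X 0 : MvPowerSeries (Fin 2) k) - X 1) * ρn =
        (X 0 : MvPowerSeries (Fin 2) k) ^ n * p - (X 1 : MvPowerSeries (Fin 2) k) ^ n * swapPS p →
      ((X 0 : MvPowerSeries (Fin 2) k) - X 1) * ρn1 =
        (X 0 : MvPowerSeries (Fin 2) k) ^ (n + 1) * p -
          (X 1 : MvPowerSeries (Fin 2) k) ^ (n + 1) * swapPS p →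
      ((X 0 : MvPowerSeries (Fin 2) k) - X 1) * ρn2 =
        (X 0 : MvPowerSeries (Fin 2) k) ^ (n + 2) * p -
          (X 1 : MvPowerSeries (Fin 2) k) ^ (n + 2) * swapPS p →
      ρn2 - ((X 0 : MvPowerSeries (Fin 2) k) + X 1) * ρn1 +
        ((X 0 : MvPowerSeries (Fin 2) k) * X 1) * ρn = 0) := by
  refine ⟨fun n => ⟨?_, ?_⟩, ?_⟩
  · obtain ⟨ρ, hρ⟩ := exists_quot ((X 0 : MvPowerSeries (Fin 2) k) ^ n * p)
    rw [swap_Xpow] at hρ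
    exact ⟨ρ, hρ, fun σ hσ => cancel (hσ.trans hρ.symm)⟩
  · intro ρ hρ
    apply cancel
    have h := congrArg swapPS hρ
    have hs := swap_swap' p
    simp only [swapPS_eq_rename, map_mul, map_sub, map_pow] at h hρ hs
    simp only [hs] at h
    simp at h
    rw [swapPS_eq_rename]
    simp at hρ ⊢
    linear_combination -h - hρ
  · intro n r0 r1 r2 h0 h1 h2
    apply cancel
    linear_combination h2 - (X 0 + X 1) * h1 + X 0 * X 1 * h0
end
end

section
/- Let k = ℤ[β_{a,b} : (a,b) ∈ ℕ² ∖ {(0,0)}] be the polynomial ring on countably many indeterminates, and let p(x,y) = 1 + Σ_{(a,b)≠(0,0)} β_{a,b} xᵃyᵇ ∈ k⟦x,y⟧ be the generic power series with constant term 1. With ρ₀, ρ₁ ∈ k⟦x₁,x₂⟧ the unique power series satisfying (x₁ − x₂)·ρ₀ = p(x₁,x₂) − p(x₂,x₁) and (x₁ − x₂)·ρ₁ = x₁·p(x₁,x₂) − x₂·p(x₂,x₁), the series ρ₁ is a unit of k⟦x₁,x₂⟧, and the following linear independence holds: for any finite collection of pairs (a,b) ∈ ℕ × ℤ and elements f_{a,b}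 of the subring ℤ⟦E₁,E₂⟧ ⊂ k⟦x₁,x₂⟧ (power series in E₁ = x₁+x₂ and E₂ = x₁x₂ with integer coefficients), the relation Σ f_{a,b}·ρ₀ᵃ·ρ₁ᵇ = 0 implies f_{a,b} = 0 for all (a,b). Equivalently, the natural map ℤ[ρ₀, ρ₁^{±1}]⟦E₁,E₂⟧ → k⟦x₁,x₂⟧ given by the power series expansions of ρ₀ and ρ₁ is injective. -/
noncomputable section
open MvPowerSeries

/-- The polynomial ring `ℤ[β_{a,b} : (a,b) ≠ (0,0)]`. -/
abbrev BetaRing : Type := MvPolynomial {ab : ℕ × ℕ // ab ≠ (0, 0)} ℤ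

/-- The generic power series `p(x,y) = 1 + Σ β_{a,b} xᵃyᵇ` with constant term `1`. -/
def genericP : MvPowerSeries (Fin 2) BetaRing :=
  fun d => if h : (d 0, d 1) = (0, 0) then 1 else MvPolynomial.X ⟨(d 0, d 1), h⟩

/-- Substitution of a family of power series (each with zero constant term) into a
multivariate power series, via the standard coefficient formula. -/
def psSubst {k : Type*} [CommRing k] {σ τ : Type*} [Fintype σ] [DecidableEq σ]
    (a : σ → MvPowerSeries τ k) (f : MvPowerSeries σ k) : MvPowerSeries τ k :=
  fun e => ∑ d ∈ Finset.Iic (Finsupp.equivFunOnFinite.symm fun _ : σ => e.sum fun _ m => m),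
    (MvPowerSeries.coeff d f) * MvPowerSeries.coeff e (∏ i, a i ^ d i)

/-- `E₁ = x₁ + x₂`. -/
def E₁ : MvPowerSeries (Fin 2) BetaRing := X 0 + X 1
/-- `E₂ = x₁·x₂`. -/
def E₂ : MvPowerSeries (Fin 2) BetaRing := X 0 * X 1

/-- Membership in the subring `ℤ⟦E₁,E₂⟧ ⊂ k⟦x₁,x₂⟧`: power series in `E₁, E₂` with
integer coefficients. -/
def InZE₁E₂ (f : MvPowerSeries (Fin 2) BetaRing) : Prop :=
  ∃ g : MvPowerSeries (Fin 2) ℤ,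
    f = psSubst ![E₁, E₂] (MvPowerSeries.map (Int.castRingHom BetaRing) g)


theorem map_psSubst13 {R S : Type*} [CommRing R] [CommRing S] (h : R →+* S)
    (a : Fin 2 → MvPowerSeries (Fin 2) R) (f : MvPowerSeries (Fin 2) R) :
    MvPowerSeries.map h (psSubst a f) =
      psSubst (fun i => MvPowerSeries.map h (a i)) (MvPowerSeries.map h f) := by
  ext e
  rw [MvPowerSeries.coeff_map]
  change h (∑ d ∈ _, _) = ∑ d ∈ _, _
  rw [map_sum]
  refine Finset.sum_congr rfl fun d _ => ?_
  rw [map_mul, ← MvPowerSeries.coeff_map, ← MvPowerSeries.coeff_map, map_prod]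
  simp only [map_pow]

theorem exists_int13 (f : MvPowerSeries (Fin 2) BetaRing) (hf : InZE₁E₂ f) :
    ∃ F : MvPowerSeries (Fin 2) ℤ, f = MvPowerSeries.map (Int.castRingHom BetaRing) F := by
  obtain ⟨g, rfl⟩ := hf
  refine ⟨psSubst ![X 0 + X 1, X 0 * X 1] g, ?_⟩
  rw [map_psSubst13]
  congr 1
  funext i
  fin_cases i <;> simp [E₁, E₂]

/-- The specialization `β₁₀ ↦ s`, `β₀₁ ↦ s - r`, all others to zero. -/
def phi13 (s r : ℤ) : BetaRing →+* ℤ :=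
  MvPolynomial.eval₂Hom (RingHom.id ℤ)
    (fun ab => if ab.1 = (1, 0) then s else if ab.1 = (0, 1) then s - r else 0)

theorem fin2_ext13 (d : Fin 2 →₀ ℕ) (a b : ℕ) :
    d = Finsupp.single 0 a + Finsupp.single 1 b ↔ d 0 = a ∧ d 1 = b := by
  constructor
  · rintro rfl; simp
  · rintro ⟨rfl, rfl⟩; ext i; fin_cases i <;> simp

theorem coeff_lin13 (s t : ℤ) (d : Fin 2 →₀ ℕ) :
    coeff d ((1 : MvPowerSeries (Fin 2) ℤ) + C s * X 0 + C t * X 1) =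
      if d 0 = 0 ∧ d 1 = 0 then 1 else if d 0 = 1 ∧ d 1 = 0 then s else
        if d 0 = 0 ∧ d 1 = 1 then t else 0 := by
  have h0 := fin2_ext13 d 0 0
  have h1 := fin2_ext13 d 1 0
  have h2 := fin2_ext13 d 0 1
  simp only [Finsupp.single_zero, add_zero, zero_add] at h0 h1 h2
  simp only [map_add, coeff_C_mul, coeff_X, coeff_one, h0, h1, h2]
  split_ifs <;> first | omega | simp

theorem phi_coeff13 (s r : ℤ) (d : Fin 2 →₀ ℕ) :
    phi13 s r (coeff d genericP) =
      if d 0 = 0 ∧ d 1 = 0 then 1 else if d 0 = 1 ∧ d 1 = 0 then s else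
        if d 0 = 0 ∧ d 1 = 1 then s - r else 0 := by
  change phi13 s r (if h : (d 0, d 1) = (0, 0) then 1 else MvPolynomial.X ⟨(d 0, d 1), h⟩) = _
  by_cases h : (d 0, d 1) = (0, 0)
  · rw [dif_pos h, map_one, if_pos (by simpa using h)]
  · rw [dif_neg h, if_neg (by simpa using h)]
    simp [phi13]

theorem phi_P13 (s r : ℤ) :
    MvPowerSeries.map (phi13 s r) genericP = 1 + C s * X 0 + C (s - r) * X 1 := by
  ext d
  rw [coeff_map, phi_coeff13, coeff_lin13]

theorem phi_swap13 (s r : ℤ) :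
    MvPowerSeries.map (phi13 s r) (swapPS genericP) = 1 + C (s - r) * X 0 + C s * X 1 := by
  ext d
  rw [coeff_map, coeff_lin13]
  change phi13 s r (coeff (Finsupp.equivMapDomain (Equiv.swap 0 1) d) genericP) = _
  rw [phi_coeff13]
  simp only [Finsupp.equivMapDomain_apply, Equiv.symm_swap, Equiv.swap_apply_left,
    Equiv.swap_apply_right]
  split_ifs <;> first | omega | rfl

theorem X_sub_ne13 : (X 0 - X 1 : MvPowerSeries (Fin 2) ℤ) ≠ 0 := by
  intro h
  have := congrArg (coeff (Finsupp.single 0 1)) h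
  simp [coeff_X, Finsupp.single_left_inj] at this

theorem E_ne13 : (X 0 + X 1 : MvPowerSeries (Fin 2) ℤ) ≠ 0 := by
  intro h
  have := congrArg (coeff (Finsupp.single 0 1)) h
  simp [coeff_X, Finsupp.single_left_inj] at this

theorem poly_zero13 {R : Type*} [CommRing R] [IsDomain R] (n : ℕ) (c : ℕ → R) (e : ℤ → R)
    (he : Function.Injective e) (h : ∀ z, ∑ i ∈ Finset.range n, c i * e z ^ i = 0) :
    ∀ i < n, c i = 0 := by
  have hp : (∑ i ∈ Finset.range n, Polynomial.C (c i) * Polynomial.X ^ i) = 0 := by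
    apply Polynomial.eq_zero_of_infinite_isRoot
    refine (Set.infinite_range_of_injective he).mono ?_
    rintro _ ⟨z, rfl⟩
    simp [Polynomial.IsRoot, Polynomial.eval_finsetSum, h]
  intro i hi
  have := congrArg (fun p => Polynomial.coeff p i) hp
  simpa [Polynomial.finsetSum_coeff, Polynomial.coeff_X_pow, hi] using this

theorem key13 {R : Type*} [CommRing R] [IsDomain R] [CharZero R] (E : R) (hE : E ≠ 0)
    (s : Finset (ℕ × ℤ)) (F : ℕ × ℤ → R) (N : ℕ) (hN : ∀ ab ∈ s, 0 ≤ ab.2 + N)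
    (h : ∀ x y : ℤ, ∑ ab ∈ s, F ab * (y : R) ^ ab.1 * (1 + x * E) ^ (ab.2 + N).toNat = 0) :
    ∀ ab ∈ s, F ab = 0 := by
  classical
  obtain ⟨A, hA⟩ : ∃ A : ℕ, ∀ ab ∈ s, ab.1 < A :=
    ⟨s.sup Prod.fst + 1, fun ab hab => Nat.lt_succ_of_le (Finset.le_sup (f := Prod.fst) hab)⟩
  obtain ⟨B, hB⟩ : ∃ B : ℕ, ∀ ab ∈ s, (ab.2 + N).toNat < B :=
    ⟨s.sup (fun ab => (ab.2 + N).toNat) + 1, fun ab hab =>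
      Nat.lt_succ_of_le (Finset.le_sup (f := fun ab : ℕ × ℤ => (ab.2 + N).toNat) hab)⟩
  let G : ℕ → ℕ → R := fun a b => if (a, (b : ℤ) - N) ∈ s then F (a, (b : ℤ) - N) else 0
  have hG : ∀ x y : ℤ, ∑ a ∈ Finset.range A,
      (∑ b ∈ Finset.range B, G a b * (1 + x * E) ^ b) * (y : R) ^ a = 0 := by
    intro x y
    rw [← h x y]
    simp_rw [Finset.sum_mul]
    rw [← Finset.sum_product']
    symm
    refine Finset.sum_of_injOn (fun ab => (ab.1, (ab.2 + N).toNat)) ?_ ?_ ?_ ?_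
    · rintro ⟨a, b⟩ h1 ⟨a', b'⟩ h2 h3
      have := hN _ h1
      have := hN _ h2
      simp only [Prod.mk.injEq] at *
      omega
    · intro ab hab
      simp [hA ab hab, hB ab hab]
    · rintro ⟨a, b⟩ _ hn
      have : (a, (b : ℤ) - N) ∉ s := by
        intro hs
        exact hn ⟨_, hs, by simp⟩
      simp [G, this]
    · rintro ⟨a, b⟩ hab
      have h1 := hN _ hab
      have h2 : (((b + N).toNat : ℕ) : ℤ) - N = b := by
        simp only at h1
        omega
      simp only [G, h2, hab, if_true]
      ring
  have h1 : ∀ a < A, ∀ x : ℤ, ∑ b ∈ Finset.range B, G a b * (1 + x * E) ^ b = 0 := fun a ha x =>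
    poly_zero13 A (fun a => ∑ b ∈ Finset.range B, G a b * (1 + x * E) ^ b) (fun y : ℤ => (y : R))
      Int.cast_injective (hG x) a ha
  have h2 : ∀ a < A, ∀ b < B, G a b = 0 := fun a ha =>
    poly_zero13 B (G a) (fun x : ℤ => 1 + x * E)
      (fun x y hxy => by simpa [hE] using hxy) (h1 a ha)
  rintro ⟨a, b⟩ hab
  have h3 := h2 a (hA _ hab) _ (hB _ hab)
  have h1 := hN _ hab
  have h4 : (((b + N).toNat : ℕ) : ℤ) - N = b := by
    simp only at h1
    omega
  simpa only [G, h4, hab, if_true] using h3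

theorem stmt13 (ρ₀ ρ₁ : MvPowerSeries (Fin 2) BetaRing)
    (hρ₀ : ((X 0 : MvPowerSeries (Fin 2) BetaRing) - X 1) * ρ₀ = genericP - swapPS genericP)
    (hρ₁ : ((X 0 : MvPowerSeries (Fin 2) BetaRing) - X 1) * ρ₁ =
      (X 0 : MvPowerSeries (Fin 2) BetaRing) * genericP -
        (X 1 : MvPowerSeries (Fin 2) BetaRing) * swapPS genericP) :
    IsUnit ρ₁ ∧
    ∀ (u : (MvPowerSeries (Fin 2) BetaRing)ˣ), (u : MvPowerSeries (Fin 2) BetaRing) = ρ₁ →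
      ∀ (s : Finset (ℕ × ℤ)) (f : ℕ × ℤ → MvPowerSeries (Fin 2) BetaRing),
        (∀ ab ∈ s, InZE₁E₂ (f ab)) →
        ∑ ab ∈ s, f ab * ρ₀ ^ ab.1 * ((u ^ ab.2 : (MvPowerSeries (Fin 2) BetaRing)ˣ) :
            MvPowerSeries (Fin 2) BetaRing) = 0 →
        ∀ ab ∈ s, f ab = 0 := by
  constructor
  · rw [MvPowerSeries.isUnit_iff_constantCoeff]
    have h := congrArg (coeff (Finsupp.single 0 1)) hρ₁
    have h01 : ¬ ((Finsupp.single 1 1 : Fin 2 →₀ ℕ) ≤ Finsupp.single 0 1) := by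
      intro hle
      have := hle 1
      simp at this
    have hg : coeff 0 genericP = 1 := by
      change (if h : ((0 : Fin 2 →₀ ℕ) 0, (0 : Fin 2 →₀ ℕ) 1) = (0, 0) then (1 : BetaRing) else
        MvPolynomial.X ⟨((0 : Fin 2 →₀ ℕ) 0, (0 : Fin 2 →₀ ℕ) 1), h⟩) = _
      exact dif_pos rfl
    rw [sub_mul, map_sub, map_sub] at h
    simp only [X_def, coeff_monomial_mul, h01, if_false, le_refl, if_true, tsub_self, one_mul,
      sub_zero, hg] at h
    rw [← coeff_zero_eq_constantCoeff_apply, h]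
    exact isUnit_one
  · intro u hu s f hf hsum
    choose! F hF using fun ab (hab : ab ∈ s) => exists_int13 (f ab) (hf ab hab)
    obtain ⟨N, hN⟩ : ∃ N : ℕ, ∀ ab ∈ s, 0 ≤ ab.2 + (N : ℤ) :=
      ⟨s.sup (fun ab => ab.2.natAbs), fun ab hab => by
        have := Finset.le_sup (f := fun ab : ℕ × ℤ => ab.2.natAbs) hab
        have h2 : ab.2.natAbs ≤ s.sup (fun ab => ab.2.natAbs) := this
        omega⟩
    have hsum2 : ∑ ab ∈ s, f ab * ρ₀ ^ ab.1 * ρ₁ ^ (ab.2 + N).toNat = 0 := by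
      have h := congrArg (· * ((u ^ N : (MvPowerSeries (Fin 2) BetaRing)ˣ) :
        MvPowerSeries (Fin 2) BetaRing)) hsum
      simp only [zero_mul, Finset.sum_mul] at h
      rw [← h]
      refine Finset.sum_congr rfl fun ab hab => ?_
      rw [mul_assoc (f ab * ρ₀ ^ ab.1), ← Units.val_mul, ← hu, ← Units.val_pow_eq_pow_val]
      congr 2
      rw [← zpow_natCast, ← zpow_natCast, ← zpow_add, Int.toNat_of_nonneg (hN ab hab)]
    have hz : ∀ ab ∈ s, F ab = 0 := by
      haveI : IsDomain (MvPowerSeries (Fin 2) ℤ) := NoZeroDivisors.to_isDomain _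
      haveI : CharZero (MvPowerSeries (Fin 2) ℤ) :=
        charZero_of_injective_ringHom (MvPowerSeries.C_injective (σ := Fin 2) (R := ℤ))
      refine key13 (X 0 + X 1) E_ne13 s F N hN fun x y => ?_
      have e0 : MvPowerSeries.map (phi13 x y) ρ₀ = (y : MvPowerSeries (Fin 2) ℤ) := by
        have h := congrArg (MvPowerSeries.map (phi13 x y)) hρ₀
        apply mul_left_cancel₀ X_sub_ne13
        simp only [map_mul, map_sub, MvPowerSeries.map_X, phi_P13, phi_swap13] at h
        rw [h]
        simp only [eq_intCast]
        ring
      have e1 : MvPowerSeries.map (phi13 x y) ρ₁ =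
          1 + (x : MvPowerSeries (Fin 2) ℤ) * (X 0 + X 1) := by
        have h := congrArg (MvPowerSeries.map (phi13 x y)) hρ₁
        apply mul_left_cancel₀ X_sub_ne13
        simp only [map_mul, map_sub, MvPowerSeries.map_X, phi_P13, phi_swap13] at h
        rw [h]
        simp only [eq_intCast]
        ring
      have h := congrArg (MvPowerSeries.map (phi13 x y)) hsum2
      rw [map_sum, map_zero] at h
      rw [← h]
      refine Finset.sum_congr rfl fun ab hab => ?_
      rw [map_mul, map_mul, map_pow, map_pow, e0, e1, hF ab hab]
      congr 2
      ext d
      simp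
    intro ab hab
    rw [hF ab hab, hz ab hab, map_zero]
end
end

section
/- Let k = ℤ[β_{a,b} : (a,b) ∈ ℕ² ∖ {(0,0)}] and let p(x,y) = 1 + Σ_{(a,b)≠(0,0)} β_{a,b} xᵃyᵇ ∈ k⟦x,y⟧ be the generic power series with constant term 1. Define in k⟦x₁,x₂⟧: E₁ = x₁ + x₂, E₂ = x₁x₂, ρ₀ and ρ₁ the unique series with (x₁ − x₂)·ρ₀ = p(x₁,x₂) − p(x₂,x₁) and (x₁ − x₂)·ρ₁ = x₁·p(x₁,x₂) − x₂·p(x₂,x₁), and the unit ρ = −p(x₁,x₂)·p(x₂,x₁). Let R ⊂ k⟦x₁,x₂⟧ be the subring generated by E₁, E₂, ρ₀, ρ₁, ρ and ρ⁻¹. Then the family 𝓑 = {ρ₁^{n₁}·ρ₀^{n₂}·ρ^{n₃} : n₁ ∈ {0,1}, n₂ ∈ ℕ, n₃ ∈ ℤ} is a basis of R as a module over the subring ℤ[E₁,E₂], and R is isomorphic to the localization ℤ[E₁,E₂,ρ₀,ρ₁][(ρ₁² − E₁ρ₁ρ₀ + E₂ρ₀²)⁻¹] of a polynomial ring in four variables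 at the single element ρ₁² − E₁ρ₁ρ₀ + E₂ρ₀² (which equals −ρ). -/
noncomputable section
open MvPowerSeries

theorem swapPS_coeff' {k : Type*} [CommRing k] (f : MvPowerSeries (Fin 2) k) (d : Fin 2 →₀ ℕ) :
    coeff d (swapPS f) = coeff (Finsupp.equivMapDomain (Equiv.swap 0 1) d) f := rfl

theorem swapPS_map {k l : Type*} [CommRing k] [CommRing l] (F : k →+* l)
    (f : MvPowerSeries (Fin 2) k) :
    MvPowerSeries.map F (swapPS f) = swapPS (MvPowerSeries.map F f) := by
  ext d
  simp [swapPS_coeff', MvPowerSeries.coeff_map]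

theorem swapPS_linear (a b : ℂ) :
    swapPS (1 + C a * X 0 + C b * X 1 : MvPowerSeries (Fin 2) ℂ) =
      1 + C a * X 1 + C b * X 0 := by
  ext d
  have h0 : Finsupp.equivMapDomain (Equiv.swap (0 : Fin 2) 1) d = 0 ↔ d = 0 := by
    simp [Finsupp.ext_iff, Fin.forall_fin_two, and_comm]
  have h1 : Finsupp.equivMapDomain (Equiv.swap (0 : Fin 2) 1) d = Finsupp.single 0 1 ↔
      d = Finsupp.single 1 1 := by
    simp [Finsupp.ext_iff, Fin.forall_fin_two, and_comm]
  have h2 : Finsupp.equivMapDomain (Equiv.swap (0 : Fin 2) 1) d = Finsupp.single 1 1 ↔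
      d = Finsupp.single 0 1 := by
    simp [Finsupp.ext_iff, Fin.forall_fin_two, and_comm]
  simp [swapPS_coeff', MvPowerSeries.coeff_one, MvPowerSeries.coeff_X, h0, h1, h2]

theorem map_genericP (P : MvPowerSeries (Fin 2) ℂ) (hP : coeff 0 P = 1) :
    ∃ F : BetaRing →+* ℂ, MvPowerSeries.map F genericP = P := by
  refine ⟨(MvPolynomial.aeval (R := ℤ) fun ab : {ab : ℕ × ℕ // ab ≠ (0, 0)} =>
    coeff (Finsupp.single 0 ab.1.1 + Finsupp.single 1 ab.1.2) P).toRingHom, ?_⟩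
  ext d
  rw [MvPowerSeries.coeff_map]
  have hd : coeff d genericP =
      if h : (d 0, d 1) = (0, 0) then 1 else MvPolynomial.X ⟨(d 0, d 1), h⟩ := rfl
  rw [hd]
  split_ifs with h
  · have : d = 0 := by
      ext i; fin_cases i <;> simp_all
    rw [this, hP]; simp
  · have : d = Finsupp.single 0 (d 0) + Finsupp.single 1 (d 1) := by
      ext i; fin_cases i <;> simp
    conv_rhs => rw [this]
    simp

theorem X_sub_ne {k : Type*} [CommRing k] [Nontrivial k] :
    (X 0 - X 1 : MvPowerSeries (Fin 2) k) ≠ 0 := by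
  intro h
  have := congrArg (coeff (Finsupp.single 0 1)) h
  simp [MvPowerSeries.coeff_X, Finsupp.single_left_inj] at this

theorem spec_eval (ρ₀ ρ₁ : MvPowerSeries (Fin 2) BetaRing)
    (hρ₀ : ((X 0 : MvPowerSeries (Fin 2) BetaRing) - X 1) * ρ₀ = genericP - swapPS genericP)
    (hρ₁ : ((X 0 : MvPowerSeries (Fin 2) BetaRing) - X 1) * ρ₁ =
      (X 0 : MvPowerSeries (Fin 2) BetaRing) * genericP -
        (X 1 : MvPowerSeries (Fin 2) BetaRing) * swapPS genericP)
    (g : MvPolynomial (Fin 4) ℤ) (hg : MvPolynomial.aeval ![E₁, E₂, ρ₀, ρ₁] g = 0)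
    (a c x y : ℂ) :
    MvPolynomial.aeval ![x + y, x * y, c, 1 + a * (x + y)] g = 0 := by
  obtain ⟨F, hF⟩ := map_genericP (1 + C a * X 0 + C (a - c) * X 1) (by simp)
  have h0 : MvPowerSeries.map F ρ₀ = C c := by
    have := congrArg (MvPowerSeries.map F) hρ₀
    rw [map_mul, map_sub, map_sub] at this
    simp only [map_mul, MvPowerSeries.map_X, swapPS_map, hF, swapPS_linear] at this
    apply mul_left_cancel₀ (X_sub_ne (k := ℂ))
    rw [this, map_sub]; ring
  have h1 : MvPowerSeries.map F ρ₁ = 1 + C a * (X 0 + X 1) := by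
    have := congrArg (MvPowerSeries.map F) hρ₁
    rw [map_mul, map_sub, map_sub] at this
    simp only [map_mul, MvPowerSeries.map_X, swapPS_map, hF, swapPS_linear] at this
    apply mul_left_cancel₀ (X_sub_ne (k := ℂ))
    rw [this, map_sub]; ring
  let G : MvPolynomial (Fin 2) ℂ := MvPolynomial.aeval (R := ℤ)
    ![MvPolynomial.X 0 + MvPolynomial.X 1, MvPolynomial.X 0 * MvPolynomial.X 1,
      MvPolynomial.C c, 1 + MvPolynomial.C a * (MvPolynomial.X 0 + MvPolynomial.X 1)] g
  have hG : G = 0 := by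
    apply MvPolynomial.coe_injective
    have key : (MvPolynomial.coeToMvPowerSeries.ringHom.comp (MvPolynomial.aeval (R := ℤ)
      ![MvPolynomial.X 0 + MvPolynomial.X 1, MvPolynomial.X 0 * MvPolynomial.X 1,
      MvPolynomial.C c, 1 + MvPolynomial.C a * (MvPolynomial.X 0 + MvPolynomial.X 1)]).toRingHom :
        MvPolynomial (Fin 4) ℤ →+* MvPowerSeries (Fin 2) ℂ) =
        (MvPowerSeries.map F).comp (MvPolynomial.aeval ![E₁, E₂, ρ₀, ρ₁]).toRingHom := by
      apply MvPolynomial.ringHom_ext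
      · intro n; simp
      · intro i
        fin_cases i <;> simp [E₁, E₂, h0, h1]
    have := DFunLike.congr_fun key g
    simp only [RingHom.comp_apply, AlgHom.toRingHom_eq_coe, RingHom.coe_coe, hg, map_zero] at this
    exact this.trans MvPolynomial.coe_zero.symm
  have key2 : ((MvPolynomial.eval ![x, y]).comp (MvPolynomial.aeval (R := ℤ)
      ![MvPolynomial.X 0 + MvPolynomial.X 1, MvPolynomial.X 0 * MvPolynomial.X 1,
      MvPolynomial.C c, 1 + MvPolynomial.C a * (MvPolynomial.X 0 + MvPolynomial.X 1)]).toRingHom :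
        MvPolynomial (Fin 4) ℤ →+* ℂ) =
        (MvPolynomial.aeval ![x + y, x * y, c, 1 + a * (x + y)]).toRingHom := by
      apply MvPolynomial.ringHom_ext
      · intro n; simp
      · intro i
        fin_cases i <;> simp
  have := DFunLike.congr_fun key2 g
  have h3 : MvPolynomial.eval ![x, y] G = 0 := by rw [hG]; simp
  exact this.symm.trans h3

theorem aeval_inj (ρ₀ ρ₁ : MvPowerSeries (Fin 2) BetaRing)
    (hρ₀ : ((X 0 : MvPowerSeries (Fin 2) BetaRing) - X 1) * ρ₀ = genericP - swapPS genericP)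
    (hρ₁ : ((X 0 : MvPowerSeries (Fin 2) BetaRing) - X 1) * ρ₁ =
      (X 0 : MvPowerSeries (Fin 2) BetaRing) * genericP -
        (X 1 : MvPowerSeries (Fin 2) BetaRing) * swapPS genericP)
    (g : MvPolynomial (Fin 4) ℤ) (hg : MvPolynomial.aeval ![E₁, E₂, ρ₀, ρ₁] g = 0) : g = 0 := by
  have h : MvPolynomial.map (Int.castRingHom ℂ) (MvPolynomial.X 0 * g) = 0 := by
    apply MvPolynomial.funext
    intro v
    rw [MvPolynomial.eval_map, map_zero]
    change MvPolynomial.eval₂ (algebraMap ℤ ℂ) v _ = 0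
    rw [← MvPolynomial.aeval_def, map_mul, MvPolynomial.aeval_X]
    by_cases hv : v 0 = 0
    · simp [hv]
    obtain ⟨s, hs⟩ := IsAlgClosed.exists_pow_nat_eq (v 0 ^ 2 - 4 * v 1) (n := 2) (by norm_num)
    have := spec_eval ρ₀ ρ₁ hρ₀ hρ₁ g hg ((v 3 - 1) / v 0) (v 2) ((v 0 + s) / 2) ((v 0 - s) / 2)
    have e : ![(v 0 + s) / 2 + (v 0 - s) / 2, (v 0 + s) / 2 * ((v 0 - s) / 2), v 2,
        1 + (v 3 - 1) / v 0 * ((v 0 + s) / 2 + (v 0 - s) / 2)] = v := by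
      ext i
      fin_cases i
      · simp; ring
      · simp; linear_combination (-1 / 4) * hs
      · simp
      · simp; field_simp; ring
    rw [e] at this
    rw [this, mul_zero]
  have h2 := MvPolynomial.map_injective (Int.castRingHom ℂ) Int.cast_injective
    (h.trans (map_zero _).symm)
  simpa using h2

/-- The evaluation homomorphism out of the iterated polynomial ring. -/
def psi {B S : Type*} [CommRing B] [CommRing S] (ι : B →+* S) (ρ₀ ρ₁ : S) :
    Polynomial (Polynomial B) →+* S :=
  Polynomial.eval₂RingHom (Polynomial.eval₂RingHom ι ρ₀) ρ₁

theorem psi_inj {B S : Type*} [CommRing B] [CommRing S] (ι : B →+* S) (ρ₀ ρ₁ : S) (b₁ b₂ : B)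
    (hB : Subring.closure {b₁, b₂} = ⊤)
    (H : ∀ g : MvPolynomial (Fin 4) ℤ,
      MvPolynomial.eval₂Hom (Int.castRingHom S) ![ι b₁, ι b₂, ρ₀, ρ₁] g = 0 → g = 0)
    (G : Polynomial (Polynomial B)) (hG : psi ι ρ₀ ρ₁ G = 0) : G = 0 := by
  obtain ⟨τ, hτdef⟩ : ∃ τ : MvPolynomial (Fin 4) ℤ →+* Polynomial (Polynomial B),
    τ = MvPolynomial.eval₂Hom (Int.castRingHom _)
    ![Polynomial.C (Polynomial.C b₁), Polynomial.C (Polynomial.C b₂),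
      Polynomial.C Polynomial.X, Polynomial.X] := ⟨_, rfl⟩
  have t0 : τ (MvPolynomial.X 0) = Polynomial.C (Polynomial.C b₁) := by simp [hτdef]
  have t1 : τ (MvPolynomial.X 1) = Polynomial.C (Polynomial.C b₂) := by simp [hτdef]
  have t2 : τ (MvPolynomial.X 2) = Polynomial.C Polynomial.X := by simp [hτdef]
  have t3 : τ (MvPolynomial.X 3) = Polynomial.X := by simp [hτdef]
  have hτ : (psi ι ρ₀ ρ₁).comp τ =
      MvPolynomial.eval₂Hom (Int.castRingHom S) ![ι b₁, ι b₂, ρ₀, ρ₁] := by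
    apply MvPolynomial.ringHom_ext
    · intro n; simp
    · intro i
      fin_cases i <;> simp [t0, t1, t2, t3, psi]
  have s0 : ∀ a : B, Polynomial.C (Polynomial.C a) ∈ τ.range := by
    intro a
    have ha : a ∈ Subring.closure {b₁, b₂} := by rw [hB]; trivial
    have hle : Subring.closure {b₁, b₂} ≤ τ.range.comap (Polynomial.C.comp Polynomial.C) := by
      rw [Subring.closure_le]
      rintro x (rfl | rfl)
      · exact ⟨_, t0⟩
      · exact ⟨_, t1⟩
    exact hle ha
  have m2 : Polynomial.C Polynomial.X ∈ τ.range := ⟨_, t2⟩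
  have m3 : Polynomial.X ∈ τ.range := ⟨_, t3⟩
  have s1 : ∀ a : Polynomial B, Polynomial.C a ∈ τ.range := by
    intro a
    induction a using Polynomial.induction_on' with
    | add p q hp hq => rw [map_add]; exact add_mem hp hq
    | monomial n a =>
      rw [← Polynomial.C_mul_X_pow_eq_monomial, map_mul, map_pow]
      exact mul_mem (s0 a) (pow_mem m2 _)
  have s2 : ∀ a : Polynomial (Polynomial B), a ∈ τ.range := by
    intro a
    induction a using Polynomial.induction_on' with
    | add p q hp hq => exact add_mem hp hq
    | monomial n a =>
      rw [← Polynomial.C_mul_X_pow_eq_monomial]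
      exact mul_mem (s1 a) (pow_mem m3 _)
  obtain ⟨g, rfl⟩ := s2 G
  have : g = 0 := H g (by
    rw [← hG]; exact (DFunLike.congr_fun hτ g).symm)
  rw [this, map_zero]

/-- `-(r₁² - e₁ r₁ r₀ + e₂ r₀²)`. -/
def qq {B : Type*} [CommRing B] (b₁ b₂ : B) : Polynomial (Polynomial B) := -(Polynomial.X ^ 2 -
  Polynomial.C (Polynomial.C b₁ * Polynomial.X) * Polynomial.X +
  Polynomial.C (Polynomial.C b₂ * Polynomial.X ^ 2))

theorem qq_degree {B : Type*} [CommRing B] [Nontrivial B] (b₁ b₂ : B) : (qq b₁ b₂).degree = 2 := by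
  unfold qq
  rw [Polynomial.degree_neg]
  compute_degree!

/-- The sequence `r₁^{n mod 2} (-q)^{n / 2}`. -/
def qseq {B : Type*} [CommRing B] [IsDomain B] (b₁ b₂ : B) :
    Polynomial.Sequence (Polynomial B) where
  elems' n := Polynomial.X ^ (n % 2) * qq b₁ b₂ ^ (n / 2)
  degree_eq' n := by
    rw [Polynomial.degree_mul, Polynomial.degree_pow, Polynomial.degree_pow, qq_degree,
      Polynomial.degree_X]
    have : n % 2 + n / 2 * 2 = n := by omega
    conv_rhs => rw [← this]
    simp

theorem pp_indep {B : Type*} [CommRing B] [IsDomain B] (b₁ b₂ : B) : LinearIndependent B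
    (fun p : ℕ × ℕ => (Polynomial.X ^ p.1 : Polynomial B) •
      (Polynomial.X ^ (p.2 % 2) * qq b₁ b₂ ^ (p.2 / 2) : Polynomial (Polynomial B))) := by
  refine linearIndependent_smul (b := fun n => (Polynomial.X ^ n : Polynomial B))
    (c := fun n => (Polynomial.X ^ (n % 2) * qq b₁ b₂ ^ (n / 2) : Polynomial (Polynomial B))) ?_
    (qseq b₁ b₂).linearIndependent
  exact (Polynomial.Sequence.mk (fun n => Polynomial.X ^ n) (by simp)).linearIndependent

theorem part2_aux {B S : Type*} [CommRing B] [IsDomain B] [CommRing S] (ι : B →+* S)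
    (b₁ b₂ : B) (ρ₀ ρ₁ : S) (H : ∀ G, psi ι ρ₀ ρ₁ G = 0 → G = 0)
    (u : Sˣ) (hq : (u : S) = -(ρ₁ ^ 2 - ι b₁ * ρ₁ * ρ₀ + ι b₂ * ρ₀ ^ 2))
    (s : Finset (Fin 2 × ℕ × ℤ)) (c : Fin 2 × ℕ × ℤ → S)
    (hc : ∀ m ∈ s, c m ∈ ι.range)
    (hs : ∑ m ∈ s, c m * ρ₁ ^ (m.1 : ℕ) * ρ₀ ^ m.2.1 * ((u ^ m.2.2 : Sˣ) : S) = 0) :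
      ∀ m ∈ s, c m = 0 := by
  have hc' : ∀ m : s, ∃ p : B, ι p = c m := fun m => hc m m.2
  choose p hp using hc'
  have hN : ∃ N : ℕ, ∀ m ∈ s, 0 ≤ m.2.2 + (N : ℤ) := by
    refine ⟨∑ m ∈ s, m.2.2.natAbs, fun m hm => ?_⟩
    have := Finset.single_le_sum (f := fun m : Fin 2 × ℕ × ℤ => m.2.2.natAbs) (fun _ _ => Nat.zero_le _) hm
    omega
  obtain ⟨N, hN⟩ := hN
  let f : s → ℕ × ℕ := fun m => (m.1.2.1, 2 * (m.1.2.2 + N).toNat + m.1.1)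
  have hf : Function.Injective f := by
    rintro ⟨⟨i, j, k⟩, hm⟩ ⟨⟨i', j', k'⟩, hm'⟩ h
    have h1 := hN _ hm
    have h2 := hN _ hm'
    simp only [f, Prod.mk.injEq] at h h1 h2
    have : (i : ℕ) = i' := by omega
    have : k = k' := by omega
    simp only [Subtype.mk.injEq, Prod.mk.injEq]
    exact ⟨Fin.ext (by assumption), h.1, by assumption⟩
  have hli := Fintype.linearIndependent_iff.mp ((pp_indep b₁ b₂).comp f hf) p
  have hpsiq : psi ι ρ₀ ρ₁ (qq b₁ b₂) = u := by
    rw [hq]; simp [psi, qq, ← Polynomial.C_pow, -map_pow]; ring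
  have hsum : ∑ m : s, p m • ((fun p : ℕ × ℕ => (Polynomial.X ^ p.1 : Polynomial B) •
      (Polynomial.X ^ (p.2 % 2) * qq b₁ b₂ ^ (p.2 / 2) : Polynomial (Polynomial B))) ∘ f) m = 0 := by
    apply H
    rw [map_sum]
    have : ∀ m : s, psi ι ρ₀ ρ₁ (p m • ((fun p : ℕ × ℕ => (Polynomial.X ^ p.1 : Polynomial B) •
      (Polynomial.X ^ (p.2 % 2) * qq b₁ b₂ ^ (p.2 / 2) : Polynomial (Polynomial B))) ∘ f) m) =
      (c m * ρ₁ ^ (m.1.1 : ℕ) * ρ₀ ^ m.1.2.1 * ((u ^ m.1.2.2 : Sˣ) : S)) * u ^ N := by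
      intro m
      have e1 : (f m).2 % 2 = m.1.1 := by simp only [f]; omega
      have e2 : (f m).2 / 2 = (m.1.2.2 + N).toNat := by simp only [f]; omega
      have e3 : ((u ^ m.1.2.2 : Sˣ) : S) * u ^ N = u ^ (m.1.2.2 + N).toNat := by
        rw [← Units.val_pow_eq_pow_val, ← Units.val_pow_eq_pow_val, ← Units.val_mul, ← zpow_natCast,
          ← zpow_natCast, ← zpow_add, Int.toNat_of_nonneg (hN _ m.2)]
      rw [mul_assoc, e3, ← hp]
      simp only [Function.comp_apply, e1, e2]
      have : ∀ (a : B) (b : Polynomial B) (z : Polynomial (Polynomial B)),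
        a • b • z = Polynomial.C (Polynomial.C a) * (Polynomial.C b * z) := by
        intro a b z
        rw [Polynomial.smul_eq_C_mul, ← algebraMap_smul (Polynomial B) a,
          Polynomial.smul_eq_C_mul]
        rfl
      rw [this, map_mul, map_mul, map_mul, map_pow, map_pow, map_pow, map_pow, hpsiq]
      simp [psi, f]
      ring
    rw [Finset.sum_congr rfl fun m _ => this m, ← Finset.sum_mul, Finset.sum_coe_sort s
      (fun m => c m * ρ₁ ^ (m.1 : ℕ) * ρ₀ ^ m.2.1 * ((u ^ m.2.2 : Sˣ) : S)), hs, zero_mul]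
  intro m hm
  rw [← hp ⟨m, hm⟩, hli hsum, map_zero]

theorem part2 {S : Type*} [CommRing S] (e₁ e₂ ρ₀ ρ₁ : S)
    (H : ∀ g : MvPolynomial (Fin 4) ℤ,
      MvPolynomial.eval₂Hom (Int.castRingHom S) ![e₁, e₂, ρ₀, ρ₁] g = 0 → g = 0)
    (u : Sˣ) (hq : (u : S) = -(ρ₁ ^ 2 - e₁ * ρ₁ * ρ₀ + e₂ * ρ₀ ^ 2))
    (s : Finset (Fin 2 × ℕ × ℤ)) (c : Fin 2 × ℕ × ℤ → S)
    (hc : ∀ m ∈ s, c m ∈ Subring.closure {e₁, e₂})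
    (hs : ∑ m ∈ s, c m * ρ₁ ^ (m.1 : ℕ) * ρ₀ ^ m.2.1 * ((u ^ m.2.2 : Sˣ) : S) = 0) :
      ∀ m ∈ s, c m = 0 := by
  obtain ⟨ι, hι⟩ : ∃ ι : MvPolynomial (Fin 2) ℤ →+* S,
    ι = MvPolynomial.eval₂Hom (Int.castRingHom S) ![e₁, e₂] := ⟨_, rfl⟩
  have i0 : ι (MvPolynomial.X 0) = e₁ := by simp [hι]
  have i1 : ι (MvPolynomial.X 1) = e₂ := by simp [hι]
  have hA : Subring.closure {e₁, e₂} ≤ ι.range := by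
    rw [Subring.closure_le]
    rintro x (rfl | rfl)
    · exact ⟨_, i0⟩
    · exact ⟨_, i1⟩
  have hB : Subring.closure {(MvPolynomial.X 0 : MvPolynomial (Fin 2) ℤ), MvPolynomial.X 1} = ⊤ := by
    rw [eq_top_iff]
    intro a _
    induction a using MvPolynomial.induction_on with
    | C n => simp
    | add p q hp hq => exact add_mem (hp trivial) (hq trivial)
    | mul_X p i hp =>
      refine mul_mem (hp trivial) (Subring.subset_closure ?_)
      fin_cases i <;> simp
  refine part2_aux ι (MvPolynomial.X 0) (MvPolynomial.X 1) ρ₀ ρ₁ ?_ u ?_ s c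
    (fun m hm => hA (hc m hm)) hs
  · apply psi_inj ι ρ₀ ρ₁ (MvPolynomial.X 0) (MvPolynomial.X 1) hB
    rwa [i0, i1]
  · rw [i0, i1, hq]

theorem part1 {S : Type*} [CommRing S] (e₁ e₂ ρ₀ ρ₁ : S)
    (u : Sˣ)
    (hq : (u : S) = -(ρ₁ ^ 2 - e₁ * ρ₁ * ρ₀ + e₂ * ρ₀ ^ 2))
    (r : S)
    (hr : r ∈ Subring.closure {e₁, e₂, ρ₀, ρ₁, (u : S),
        ((u⁻¹ : Sˣ) : S)}) :
    ∃ (s : Finset (Fin 2 × ℕ × ℤ)) (c : Fin 2 × ℕ × ℤ → S),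
      (∀ m ∈ s, c m ∈ Subring.closure {e₁, e₂}) ∧
      r = ∑ m ∈ s, c m * ρ₁ ^ (m.1 : ℕ) * ρ₀ ^ m.2.1 *
        ((u ^ m.2.2 : Sˣ) : S) := by
  let A : Subring (S) := Subring.closure {e₁, e₂}
  let v : Fin 2 × ℕ × ℤ → S := fun m => ρ₁ ^ (m.1 : ℕ) * ρ₀ ^ m.2.1 *
        ((u ^ m.2.2 : Sˣ) : S)
  let M : Submodule A (S) := Submodule.span A (Set.range v)
  have hE1 : e₁ ∈ A := Subring.subset_closure (by simp)
  have hE2 : e₂ ∈ A := Subring.subset_closure (by simp)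
  have hv : ∀ m, v m ∈ M := fun m => Submodule.subset_span ⟨m, rfl⟩
  have hsm : ∀ a ∈ A, ∀ x ∈ M, a * x ∈ M := fun a ha x hx => M.smul_mem ⟨a, ha⟩ hx
  have step : ∀ t : S, (∀ m, t * v m ∈ M) → ∀ x ∈ M, t * x ∈ M := by
    intro t ht x hx
    induction hx using Submodule.span_induction with
    | mem x h => obtain ⟨m, rfl⟩ := h; exact ht m
    | zero => simp
    | add x y _ _ hx hy => rw [mul_add]; exact add_mem hx hy
    | smul a x _ hx => rw [mul_smul_comm]; exact M.smul_mem a hx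
  have h0 : ∀ x ∈ M, ρ₀ * x ∈ M := by
    refine step _ fun m => ?_
    have : ρ₀ * v m = v (m.1, m.2.1 + 1, m.2.2) := by simp only [v]; ring
    rw [this]; exact hv _
  have hu : ∀ x ∈ M, (u : S) * x ∈ M := by
    refine step _ fun m => ?_
    have : (u : S) * v m = v (m.1, m.2.1, m.2.2 + 1) := by
      simp only [v, zpow_add_one, Units.val_mul]; ring
    rw [this]; exact hv _
  have hui : ∀ x ∈ M, ((u⁻¹ : Sˣ) : S) * x ∈ M := by
    refine step _ fun m => ?_
    have : ((u⁻¹ : Sˣ) : S) * v m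
        = v (m.1, m.2.1, m.2.2 - 1) := by
      simp only [v, zpow_sub_one, Units.val_mul]; ring
    rw [this]; exact hv _
  have h1 : ∀ x ∈ M, ρ₁ * x ∈ M := by
    refine step _ ?_
    rintro ⟨i, j, k⟩
    fin_cases i
    · have : ρ₁ * v (0, j, k) = v (1, j, k) := by simp [v]; ring
      exact this ▸ hv _
    · have : ρ₁ * v (1, j, k) = e₁ * (ρ₀ * v (1, j, k)) - e₂ * (ρ₀ * (ρ₀ * v (0, j, k)))
          - u * v (0, j, k) := by
        rw [hq]; simp [v]; ring
      change ρ₁ * v (1, j, k) ∈ M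
      rw [this]
      exact sub_mem (sub_mem (hsm _ hE1 _ (h0 _ (hv _))) (hsm _ hE2 _ (h0 _ (h0 _ (hv _)))))
        (hu _ (hv _))
  have all : ∀ x ∈ M, r * x ∈ M := by
    induction hr using Subring.closure_induction with
    | mem x h =>
      rcases h with rfl | rfl | rfl | rfl | rfl | rfl
      · exact hsm _ hE1
      · exact hsm _ hE2
      · exact h0
      · exact h1
      · exact hu
      · exact hui
    | zero => simp
    | one => simp
    | add x y _ _ hx hy => intro z hz; rw [add_mul]; exact add_mem (hx z hz) (hy z hz)
    | neg x _ hx => intro z hz; rw [neg_mul]; exact neg_mem (hx z hz)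
    | mul x y _ _ hx hy => intro z hz; rw [mul_assoc]; exact hx _ (hy z hz)
  have hrM : r ∈ M := by
    have := all (v (0, 0, 0)) (hv _)
    simpa [v] using this
  obtain ⟨c, hc⟩ := Finsupp.mem_span_range_iff_exists_finsupp.mp hrM
  refine ⟨c.support, fun m => (c m : S), fun m _ => (c m).2, ?_⟩
  rw [← hc, Finsupp.sum]
  refine Finset.sum_congr rfl fun m _ => ?_
  rw [Subring.smul_def, smul_eq_mul]
  simp only [v]; ring

theorem part3 (ρ₀ ρ₁ : MvPowerSeries (Fin 2) BetaRing)
    (H : ∀ g : MvPolynomial (Fin 4) ℤ, MvPolynomial.aeval ![E₁, E₂, ρ₀, ρ₁] g = 0 → g = 0)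
    (u : (MvPowerSeries (Fin 2) BetaRing)ˣ)
    (hq : (u : MvPowerSeries (Fin 2) BetaRing) = -(ρ₁ ^ 2 - E₁ * ρ₁ * ρ₀ + E₂ * ρ₀ ^ 2)) :
    (∃ φ : Localization.Away
        ((MvPolynomial.X 3) ^ 2 - MvPolynomial.X 0 * MvPolynomial.X 3 * MvPolynomial.X 2 +
          MvPolynomial.X 1 * (MvPolynomial.X 2) ^ 2 : MvPolynomial (Fin 4) ℤ) →+*
        MvPowerSeries (Fin 2) BetaRing,
      (∀ g : MvPolynomial (Fin 4) ℤ,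
        φ (algebraMap (MvPolynomial (Fin 4) ℤ) _ g) = MvPolynomial.aeval ![E₁, E₂, ρ₀, ρ₁] g) ∧
      Function.Injective φ ∧
      Set.range φ = (Subring.closure {E₁, E₂, ρ₀, ρ₁, (u : MvPowerSeries (Fin 2) BetaRing),
        ((u⁻¹ : (MvPowerSeries (Fin 2) BetaRing)ˣ) : MvPowerSeries (Fin 2) BetaRing)} :
        Set (MvPowerSeries (Fin 2) BetaRing))) := by
  set q : MvPolynomial (Fin 4) ℤ := (MvPolynomial.X 3) ^ 2 - MvPolynomial.X 0 * MvPolynomial.X 3 * MvPolynomial.X 2 +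
          MvPolynomial.X 1 * (MvPolynomial.X 2) ^ 2 with hqdef
  have hqu : MvPolynomial.aeval ![E₁, E₂, ρ₀, ρ₁] q = -(u : MvPowerSeries (Fin 2) BetaRing) := by
    rw [hq, hqdef]; simp
  have hunit : IsUnit ((MvPolynomial.aeval (R := ℤ) ![E₁, E₂, ρ₀, ρ₁]).toRingHom q) := by
    change IsUnit (MvPolynomial.aeval ![E₁, E₂, ρ₀, ρ₁] q)
    rw [hqu]; exact u.isUnit.neg
  let φ : Localization.Away q →+* MvPowerSeries (Fin 2) BetaRing := IsLocalization.Away.lift q hunit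
  have hφ : ∀ g : MvPolynomial (Fin 4) ℤ,
        φ (algebraMap (MvPolynomial (Fin 4) ℤ) _ g) = MvPolynomial.aeval ![E₁, E₂, ρ₀, ρ₁] g :=
    fun g => IsLocalization.Away.lift_eq q hunit g
  have hz : ∀ z : Localization.Away q, ∃ (n : ℕ) (a : MvPolynomial (Fin 4) ℤ),
      z * algebraMap (MvPolynomial (Fin 4) ℤ) _ q ^ n = algebraMap _ _ a :=
    fun z => IsLocalization.Away.surj q z
  refine ⟨φ, hφ, ?_, ?_⟩
  · rw [injective_iff_map_eq_zero]
    intro z hz0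
    obtain ⟨n, a, h⟩ := hz z
    have h2 := congrArg φ h
    rw [map_mul, hz0, zero_mul, hφ] at h2
    rw [H a h2.symm, map_zero] at h
    exact ((IsLocalization.Away.algebraMap_isUnit q).pow n).mul_left_eq_zero.mp h
  · apply Set.Subset.antisymm
    · rintro _ ⟨z, rfl⟩
      obtain ⟨n, a, h⟩ := hz z
      have h2 := congrArg φ h
      rw [map_mul, map_pow, hφ, hφ, hqu] at h2
      have h3 : φ z = MvPolynomial.aeval ![E₁, E₂, ρ₀, ρ₁] a *
          (-((u⁻¹ : (MvPowerSeries (Fin 2) BetaRing)ˣ) : MvPowerSeries (Fin 2) BetaRing)) ^ n := by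
        rw [← h2, mul_assoc, ← mul_pow]; simp
      rw [h3]
      refine mul_mem ?_ (pow_mem (neg_mem (Subring.subset_closure (by simp))) n)
      have hle : ∀ b : MvPolynomial (Fin 4) ℤ, MvPolynomial.aeval ![E₁, E₂, ρ₀, ρ₁] b ∈
          Subring.closure {E₁, E₂, ρ₀, ρ₁, (u : MvPowerSeries (Fin 2) BetaRing),
          ((u⁻¹ : (MvPowerSeries (Fin 2) BetaRing)ˣ) : MvPowerSeries (Fin 2) BetaRing)} := by
        intro b
        induction b using MvPolynomial.induction_on with
        | C n => simp
        | add p q hp hq => rw [map_add]; exact add_mem hp hq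
        | mul_X p i hp =>
          rw [map_mul, MvPolynomial.aeval_X]
          refine mul_mem hp (Subring.subset_closure ?_)
          fin_cases i <;> simp
      exact hle a
    · change Subring.closure _ ≤ φ.range
      rw [Subring.closure_le]
      have hu' : (u : MvPowerSeries (Fin 2) BetaRing) = φ (-algebraMap _ _ q) := by
        rw [map_neg, hφ, hqu, neg_neg]
      rintro x (rfl | rfl | rfl | rfl | rfl | rfl)
      · exact ⟨algebraMap (MvPolynomial (Fin 4) ℤ) _ (MvPolynomial.X 0), by rw [hφ]; simp⟩
      · exact ⟨algebraMap (MvPolynomial (Fin 4) ℤ) _ (MvPolynomial.X 1), by rw [hφ]; simp⟩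
      · exact ⟨algebraMap (MvPolynomial (Fin 4) ℤ) _ (MvPolynomial.X 2), by rw [hφ]; simp⟩
      · exact ⟨algebraMap (MvPolynomial (Fin 4) ℤ) _ (MvPolynomial.X 3), by rw [hφ]; simp⟩
      · exact ⟨_, hu'.symm⟩
      · refine ⟨-IsLocalization.Away.invSelf q, ?_⟩
        apply u.isUnit.mul_left_cancel
        rw [Units.mul_inv]
        conv_lhs => rw [hu']
        rw [← map_mul, neg_mul_neg, IsLocalization.Away.mul_invSelf, map_one]

theorem stmt14 (ρ₀ ρ₁ : MvPowerSeries (Fin 2) BetaRing)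
    (hρ₀ : ((X 0 : MvPowerSeries (Fin 2) BetaRing) - X 1) * ρ₀ = genericP - swapPS genericP)
    (hρ₁ : ((X 0 : MvPowerSeries (Fin 2) BetaRing) - X 1) * ρ₁ =
      (X 0 : MvPowerSeries (Fin 2) BetaRing) * genericP -
        (X 1 : MvPowerSeries (Fin 2) BetaRing) * swapPS genericP)
    -- `ρ = −p(x₁,x₂)·p(x₂,x₁)`, a unit `u`
    (u : (MvPowerSeries (Fin 2) BetaRing)ˣ)
    (hu : (u : MvPowerSeries (Fin 2) BetaRing) = -(genericP * swapPS genericP)) :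
    -- `A = ℤ[E₁,E₂]` and `R = ⟨E₁, E₂, ρ₀, ρ₁, ρ, ρ⁻¹⟩`
    let A : Subring (MvPowerSeries (Fin 2) BetaRing) := Subring.closure {E₁, E₂}
    let Rsub : Subring (MvPowerSeries (Fin 2) BetaRing) :=
      Subring.closure {E₁, E₂, ρ₀, ρ₁, (u : MvPowerSeries (Fin 2) BetaRing),
        ((u⁻¹ : (MvPowerSeries (Fin 2) BetaRing)ˣ) : MvPowerSeries (Fin 2) BetaRing)}
    -- the family 𝓑 spans `R` over `ℤ[E₁,E₂]` …
    (∀ r ∈ Rsub, ∃ (s : Finset (Fin 2 × ℕ × ℤ)) (c : Fin 2 × ℕ × ℤ → MvPowerSeries (Fin 2) BetaRing),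
      (∀ m ∈ s, c m ∈ A) ∧
      r = ∑ m ∈ s, c m * ρ₁ ^ (m.1 : ℕ) * ρ₀ ^ m.2.1 *
        ((u ^ m.2.2 : (MvPowerSeries (Fin 2) BetaRing)ˣ) : MvPowerSeries (Fin 2) BetaRing)) ∧
    -- … and is linearly independent over `ℤ[E₁,E₂]`
    (∀ (s : Finset (Fin 2 × ℕ × ℤ)) (c : Fin 2 × ℕ × ℤ → MvPowerSeries (Fin 2) BetaRing),
      (∀ m ∈ s, c m ∈ A) →
      ∑ m ∈ s, c m * ρ₁ ^ (m.1 : ℕ) * ρ₀ ^ m.2.1 *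
        ((u ^ m.2.2 : (MvPowerSeries (Fin 2) BetaRing)ˣ) : MvPowerSeries (Fin 2) BetaRing) = 0 →
      ∀ m ∈ s, c m = 0) ∧
    -- `R` is the localization of `ℤ[E₁,E₂,ρ₀,ρ₁]` at `ρ₁² − E₁ρ₁ρ₀ + E₂ρ₀²` via the natural map
    (∃ φ : Localization.Away
        ((MvPolynomial.X 3) ^ 2 - MvPolynomial.X 0 * MvPolynomial.X 3 * MvPolynomial.X 2 +
          MvPolynomial.X 1 * (MvPolynomial.X 2) ^ 2 : MvPolynomial (Fin 4) ℤ) →+*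
        MvPowerSeries (Fin 2) BetaRing,
      (∀ g : MvPolynomial (Fin 4) ℤ,
        φ (algebraMap (MvPolynomial (Fin 4) ℤ) _ g) = MvPolynomial.aeval ![E₁, E₂, ρ₀, ρ₁] g) ∧
      Function.Injective φ ∧
      Set.range φ = (Rsub : Set (MvPowerSeries (Fin 2) BetaRing))) := by
  have hp : genericP = ρ₁ - X 1 * ρ₀ := by
    apply mul_left_cancel₀ (X_sub_ne (k := BetaRing))
    linear_combination X 1 * hρ₀ - hρ₁
  have hp' : swapPS genericP = ρ₁ - X 0 * ρ₀ := by
    apply mul_left_cancel₀ (X_sub_ne (k := BetaRing))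
    linear_combination X 0 * hρ₀ - hρ₁
  have hq : (u : MvPowerSeries (Fin 2) BetaRing) = -(ρ₁ ^ 2 - E₁ * ρ₁ * ρ₀ + E₂ * ρ₀ ^ 2) := by
    rw [hu, hp', hp]; simp only [E₁, E₂]; ring
  have H := aeval_inj ρ₀ ρ₁ hρ₀ hρ₁
  have H' : ∀ g : MvPolynomial (Fin 4) ℤ, MvPolynomial.eval₂Hom
      (Int.castRingHom (MvPowerSeries (Fin 2) BetaRing)) ![E₁, E₂, ρ₀, ρ₁] g = 0 → g = 0 := by
    intro g hg
    apply H g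
    rw [← hg, MvPolynomial.aeval_def, MvPolynomial.coe_eval₂Hom]
    congr 1
    exact Subsingleton.elim _ _
  intro A Rsub
  have P1 := part1 E₁ E₂ ρ₀ ρ₁ u hq
  have P2 := part2 E₁ E₂ ρ₀ ρ₁ H' u hq
  have P3 := part3 ρ₀ ρ₁ H u hq
  exact ⟨P1, P2, P3⟩
end
end

section
/- Let k = ℤ[β_{a,b} : (a,b) ∈ ℕ² ∖ {(0,0)}] and let p(x,y) = 1 + Σ_{(a,b)≠(0,0)} β_{a,b} xᵃyᵇ ∈ k⟦x,y⟧ be the generic power series with constant term 1. In k⟦x₁,x₂⟧, let ρ₁ be the unique power series with (x₁ − x₂)·ρ₁ = x₁·p(x₁,x₂) − x₂·p(x₂,x₁), and let E₁ = x₁ + x₂, E₂ = x₁x₂. Then the three elements ρ₁, E₁, E₂ of k⟦x₁,x₂⟧ are algebraically independent over ℤ. -/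
noncomputable section
open MvPowerSeries

/-- A ring homomorphism is ℤ-linear for any ℤ-algebra structures. -/
def intAlg {R S : Type*} [CommRing R] [CommRing S] [Algebra ℤ R] [Algebra ℤ S] (f : R →+* S) :
    R →ₐ[ℤ] S :=
  { f with commutes' := fun n => by simp }

@[simp] theorem intAlg_apply {R S : Type*} [CommRing R] [CommRing S] [Algebra ℤ R] [Algebra ℤ S]
    (f : R →+* S) (x : R) : intAlg f x = f x := rfl

theorem aux_poly_field {K : Type} [Field K] [IsAlgClosed K] (j : MvPolynomial (Fin 3) ℤ →+* K)
    (hj : Function.Injective j) (P : Fin 3 → MvPolynomial (Fin 2) (Polynomial ℤ))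
    (h0 : P 0 = 1 + MvPolynomial.C Polynomial.X * (MvPolynomial.X 0 + MvPolynomial.X 1))
    (h1 : P 1 = MvPolynomial.X 0 + MvPolynomial.X 1)
    (h2 : P 2 = MvPolynomial.X 0 * MvPolynomial.X 1) : AlgebraicIndependent ℤ P := by
  let y : Fin 3 → K := fun i => j (MvPolynomial.X i)
  have hy : AlgebraicIndependent ℤ y :=
    (MvPolynomial.algebraicIndependent_X (Fin 3) ℤ).map' (f := j.toIntAlgHom) hj
  have hy1 : y 1 ≠ 0 := by
    intro h
    have : (MvPolynomial.X 1 : MvPolynomial (Fin 3) ℤ) = 0 := hj (by rw [map_zero]; exact h)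
    exact MvPolynomial.X_ne_zero _ this
  obtain ⟨r, hr⟩ : ∃ r : K, r * (y 1 - r) = y 2 := by
    obtain ⟨r, hr⟩ := IsAlgClosed.exists_root
      (Polynomial.C 1 * Polynomial.X ^ 2 + Polynomial.C (-y 1) * Polynomial.X + Polynomial.C (y 2)) (by
        rw [Polynomial.degree_quadratic one_ne_zero]; decide)
    refine ⟨r, ?_⟩
    simp [Polynomial.IsRoot] at hr
    linear_combination -hr
  let g : MvPolynomial (Fin 2) (Polynomial ℤ) →+* K :=
    MvPolynomial.eval₂Hom (Polynomial.aeval ((y 0 - 1) / y 1)).toRingHom ![r, y 1 - r]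
  apply AlgebraicIndependent.of_comp g.toIntAlgHom
  convert hy using 1
  funext i
  fin_cases i
  · simp [g, h0]; field_simp; ring
  · simp [g, h1]
  · simp [g, h2, hr]

theorem aux_poly (P : Fin 3 → MvPolynomial (Fin 2) (Polynomial ℤ))
    (h0 : P 0 = 1 + MvPolynomial.C Polynomial.X * (MvPolynomial.X 0 + MvPolynomial.X 1))
    (h1 : P 1 = MvPolynomial.X 0 + MvPolynomial.X 1)
    (h2 : P 2 = MvPolynomial.X 0 * MvPolynomial.X 1) : AlgebraicIndependent ℤ P := by
  let A := MvPolynomial (Fin 3) ℤ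
  let F := FractionRing A
  exact aux_poly_field ((algebraMap F (AlgebraicClosure F)).comp (algebraMap A F))
    ((algebraMap F (AlgebraicClosure F)).injective.comp (IsFractionRing.injective A F)) P h0 h1 h2

def spec : BetaRing →+* Polynomial ℤ :=
  (MvPolynomial.aeval (R := ℤ) (fun ab : {ab : ℕ × ℕ // ab ≠ (0, 0)} =>
    if ab.1 = (1, 0) then (Polynomial.X : Polynomial ℤ) else 0)).toRingHom

theorem fin2_eq (d e : Fin 2 →₀ ℕ) : d = e ↔ (d 0 = e 0 ∧ d 1 = e 1) := by
  constructor
  · rintro rfl; simp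
  · rintro ⟨h, h'⟩; ext i; fin_cases i <;> assumption

theorem spec_coeff (d : Fin 2 →₀ ℕ) : spec (genericP d) =
    if d 0 = 0 ∧ d 1 = 0 then 1 else if d 0 = 1 ∧ d 1 = 0 then Polynomial.X else 0 := by
  unfold genericP
  split_ifs <;> first | (simp_all [spec]; done) | (exfalso; grind)

theorem map_genericP_s15 : MvPowerSeries.map spec genericP =
    1 + C Polynomial.X * (X 0 : MvPowerSeries (Fin 2) (Polynomial ℤ)) := by
  ext1 d
  rw [MvPowerSeries.coeff_map]
  change spec (genericP d) = _
  rw [spec_coeff]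
  simp only [map_add, coeff_one, coeff_C_mul, coeff_X, fin2_eq]
  simp
  split_ifs <;> simp_all

theorem map_swap_genericP : MvPowerSeries.map spec (swapPS genericP) =
    1 + C Polynomial.X * (X 1 : MvPowerSeries (Fin 2) (Polynomial ℤ)) := by
  ext1 d
  rw [MvPowerSeries.coeff_map]
  change spec (genericP (Finsupp.equivMapDomain (Equiv.swap 0 1) d)) = _
  rw [spec_coeff]
  simp only [map_add, coeff_one, coeff_C_mul, coeff_X, fin2_eq]
  simp [Finsupp.equivMapDomain_apply]
  split_ifs <;> simp_all

theorem stmt15 (ρ₁ : MvPowerSeries (Fin 2) BetaRing)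
    (hρ₁ : ((X 0 : MvPowerSeries (Fin 2) BetaRing) - X 1) * ρ₁ =
      (X 0 : MvPowerSeries (Fin 2) BetaRing) * genericP -
        (X 1 : MvPowerSeries (Fin 2) BetaRing) * swapPS genericP) :
    AlgebraicIndependent ℤ ![ρ₁, E₁, E₂] := by
  have h := congrArg (MvPowerSeries.map spec) hρ₁
  simp only [map_mul, map_sub, map_genericP_s15, map_swap_genericP, MvPowerSeries.map_X] at h
  have hne : (X 0 : MvPowerSeries (Fin 2) (Polynomial ℤ)) - X 1 ≠ 0 := by
    rw [sub_ne_zero]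
    intro h
    exact absurd (MvPowerSeries.X_inj.mp h) (by decide)
  have hρ : MvPowerSeries.map spec ρ₁ = 1 + C Polynomial.X * (X 0 + X 1) := by
    apply mul_left_cancel₀ hne
    rw [h]; ring
  apply AlgebraicIndependent.of_comp (intAlg (MvPowerSeries.map (σ := Fin 2) spec))
  have hP := (aux_poly ![1 + MvPolynomial.C Polynomial.X * (MvPolynomial.X 0 + MvPolynomial.X 1),
    MvPolynomial.X 0 + MvPolynomial.X 1, MvPolynomial.X 0 * MvPolynomial.X 1] rfl rfl rfl).map'
    (f := intAlg MvPolynomial.coeToMvPowerSeries.ringHom)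
    (MvPolynomial.coe_injective (Fin 2) (Polynomial ℤ))
  convert hP using 1
  funext i
  fin_cases i
  · simp [hρ]
  · simp [E₁]
  · simp [E₂]
end
end
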